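/- Every correlated equilibrium collection {F_c} of a Bayesian game G yields optimizer expected value E_{c∼D} E_{(i,j)∼F_c}[u_O(i,j,c)] at most PerConVal(G) = Σ_c p_c Val(G_c), where Val(G_c) is the Stackelberg value of the context-c standard game; i.e., CorrVal(G) ≤ PerConVal(G). [This uses that the Stackelberg value of a standard game is at least the optimizer's utility in any correlated equilibrium of that game.] -/

import Mathlib

open Finset

/-!
Condition on the recommendation `j` the learner receives in context `c`. Stability under swaps makes
`j` a best response to the conditional distribution of the optimizer's action, so that conditional
distribution is a commitment available in the Stackelberg problem of context `c`, and the
optimizer's conditional payoff is at most `Val c`. Averaging over `j` and then over `c` gives the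
bound. To avoid dividing by the probability of `j`, which may vanish, best responses are
considered for arbitrary weights; they do not change when the weights are rescaled.
-/

section OrderedSemiring

variable {ι κ R : Type*} [Fintype ι] [Semiring R] [PartialOrder R]

/-- The action `j` of the learner, whose payoffs are `u`, is a best response to the optimizer's
mixed strategy `α`. The weights `α` need not sum to `1`. -/
def IsBestResponse (u : ι → κ → R) (α : ι → R) (j : κ) : Prop :=
  ∀ j', ∑ i, α i * u i j' ≤ ∑ i, α i * u i j

/-- Condition (ii) of a correlated equilibrium in a standard game: under the joint distribution `F`
of actions, the learner, whose payoffs are `u`, does not gain by swapping its actions. -/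
def NoSwapRegret [Fintype κ] (u : ι → κ → R) (F : ι × κ → R) : Prop :=
  ∀ π : κ → κ, ∑ q, F q * u q.1 (π q.2) ≤ ∑ q, F q * u q.1 q.2

/-- The payoffs the optimizer can attain by committing to a mixed strategy to which the learner best
responds. The Stackelberg value is the supremum of this set: since every best response is allowed,
ties are broken in favour of the optimizer. -/
def stackelbergPayoffs (uO uL : ι → κ → R) : Set R :=
  {z | ∃ α : ι → R, (∀ i, 0 ≤ α i) ∧ (∑ i, α i = 1) ∧
    ∃ j, IsBestResponse uL α j ∧ z = ∑ i, α i * uO i j}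

theorem IsBestResponse.const_mul [IsOrderedRing R] {u : ι → κ → R} {α : ι → R} {j : κ}
    (h : IsBestResponse u α j) {t : R} (ht : 0 ≤ t) :
    IsBestResponse u (fun i => t * α i) j := by
  intro j'
  simp only [mul_assoc, ← mul_sum]
  exact mul_le_mul_of_nonneg_left (h j') ht

theorem NoSwapRegret.isBestResponse [Fintype κ] [IsOrderedCancelAddMonoid R] {u : ι → κ → R}
    {F : ι × κ → R} (h : NoSwapRegret u F) (j : κ) :
    IsBestResponse u (fun i => F (i, j)) j := by
  classical
  intro j'
  let payoff (k l : κ) : R := ∑ i, F (i, k) * u i l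
  have swap : ∑ k, payoff k (Function.update id j j' k) ≤ ∑ k, payoff k k := by
    simpa only [Fintype.sum_prod_type_right] using h (Function.update id j j')
  simp only [Function.apply_update, id_eq, sum_update_of_mem (mem_univ j)] at swap
  rw [sum_eq_add_sum_sdiff_singleton_of_mem (mem_univ j) fun k => payoff k k] at swap
  exact le_of_add_le_add_right swap

end OrderedSemiring

section LinearOrderedField

variable {ι κ 𝕜 : Type*} [Fintype ι] [Field 𝕜] [LinearOrder 𝕜] [IsStrictOrderedRing 𝕜]
  {uO uL : ι → κ → 𝕜} {v : 𝕜}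

theorem IsBestResponse.payoff_le {α : ι → 𝕜} {j : κ} (h : IsBestResponse uL α j)
    (hα : ∀ i, 0 ≤ α i) (hv : v ∈ upperBounds (stackelbergPayoffs uO uL)) :
    ∑ i, α i * uO i j ≤ (∑ i, α i) * v := by
  set w := ∑ i, α i with hw
  have w_nonneg : 0 ≤ w := sum_nonneg fun i _ => hα i
  rcases w_nonneg.eq_or_lt with w_zero | w_pos
  · have α_zero : ∀ i, α i = 0 := by
      simpa [sum_eq_zero_iff_of_nonneg fun i _ => hα i] using hw.symm.trans w_zero.symm
    simp [α_zero, ← w_zero]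
  · have attained : w⁻¹ * ∑ i, α i * uO i j ∈ stackelbergPayoffs uO uL := by
      refine ⟨fun i => w⁻¹ * α i, fun i => mul_nonneg (inv_nonneg.2 w_nonneg) (hα i), ?_,
        j, h.const_mul (inv_nonneg.2 w_nonneg), ?_⟩
      · rw [← mul_sum, ← hw, inv_mul_cancel₀ w_pos.ne']
      · simp only [mul_assoc, mul_sum]
    exact (inv_mul_le_iff₀ w_pos).1 (hv attained)

theorem NoSwapRegret.payoff_le [Fintype κ] {F : ι × κ → 𝕜} (h : NoSwapRegret uL F)
    (hF : ∀ q, 0 ≤ F q) (hv : v ∈ upperBounds (stackelbergPayoffs uO uL)) :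
    ∑ q, F q * uO q.1 q.2 ≤ (∑ q, F q) * v := by
  rw [Fintype.sum_prod_type_right, Fintype.sum_prod_type_right F, sum_mul]
  exact sum_le_sum fun j _ => (h.isBestResponse j).payoff_le (fun i => hF (i, j)) hv

theorem stmt14_general {γ : Type*} [Fintype γ] [Fintype κ] (p : γ → 𝕜) (hp : ∀ c, 0 ≤ p c)
    (uO uL : ι → κ → γ → 𝕜) (F : γ → ι × κ → 𝕜)
    (hF0 : ∀ c q, 0 ≤ F c q) (hF1 : ∀ c, ∑ q, F c q = 1)
    (hF : ∀ c, NoSwapRegret (fun i j => uL i j c) (F c)) (Val : γ → 𝕜)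
    (hVal : ∀ c, IsLUB (stackelbergPayoffs (fun i j => uO i j c) (fun i j => uL i j c)) (Val c)) :
    ∑ c, p c * ∑ q, F c q * uO q.1 q.2 c ≤ ∑ c, p c * Val c := by
  have context_le (c : γ) : ∑ q, F c q * uO q.1 q.2 c ≤ Val c := by
    simpa only [hF1, one_mul] using (hF c).payoff_le (hF0 c) (hVal c).1
  exact sum_le_sum fun c _ => mul_le_mul_of_nonneg_left (context_le c) (hp c)

end LinearOrderedField

theorem stmt14 (M N C : ℕ)
    (p : Fin C → ℝ) (hp0 : ∀ c, 0 ≤ p c) (hp1 : ∑ c, p c = 1)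
    (uO uL : Fin M → Fin N → Fin C → ℝ)
    (F : Fin C → Fin M × Fin N → ℝ)
    (hF0 : ∀ c q, 0 ≤ F c q) (hF1 : ∀ c, ∑ q, F c q = 1)
    (hCE1 : ∀ c c', ∑ q : Fin M × Fin N, F c' q * uL q.1 q.2 c
      ≤ ∑ q : Fin M × Fin N, F c q * uL q.1 q.2 c)
    (hCE2 : ∀ c, ∀ π : Fin N → Fin N,
      ∑ q : Fin M × Fin N, F c q * uL q.1 (π q.2) c
        ≤ ∑ q : Fin M × Fin N, F c q * uL q.1 q.2 c)
    (Val : Fin C → ℝ)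
    (hVal : ∀ c, IsGreatest {z | ∃ α : Fin M → ℝ,
      (∀ i, 0 ≤ α i) ∧ (∑ i, α i = 1) ∧
      ∃ j : Fin N, (∀ j', ∑ i, α i * uL i j' c ≤ ∑ i, α i * uL i j c) ∧
        z = ∑ i, α i * uO i j c} (Val c)) :
    ∑ c, p c * ∑ q : Fin M × Fin N, F c q * uO q.1 q.2 c
      ≤ ∑ c, p c * Val c :=
  stmt14_general p hp0 uO uL F hF0 hF1 hCE2 Val fun c => (hVal c).isLUB
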